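/- Let V be a finite-dimensional vector space over a field K of characteristic zero and N a nilpotent endomorphism of V. Then there exists a unique increasing filtration (M_r)_{r ∈ ℤ} of V (the monodromy filtration) that is exhaustive and separated, satisfies N(M_r) ⊆ M_{r-2} for all r, and such that for every r ≥ 0 the induced map N^r : M_r/M_{r-1} → M_{-r}/M_{-r-1} is an isomorphism. -/

import Mathlib

/-!
For uniqueness, separatedness upgrades surjectivity on graded pieces to `N ^ r (M r) = M (-r)`, by
successive corrections. Injectivity on graded pieces then reads
`M r = M (r + 1) ⊓ (N ^ (r + 1))⁻¹ (N ^ (r + 2) (M (r + 2)))` for `r ≥ 0`, a recursion that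
determines `M` downwards from `M r = ⊤`.

For existence, `M r = ∑ q, N ^ q (ker N ^ (r + 2 * q + 1))` works. Here too `N ^ r (M r) = M (-r)`,
so if `N ^ r x` lies in `M (-r - 1) = N ^ (r + 1) (M (r + 1))`, then `x` is the sum of an element
of `N (M (r + 1)) ⊆ M (r - 1)` and an element of `ker N ^ r ⊆ M (r - 1)`.
-/

section MonodromyFiltration

variable {R V : Type*} [Ring R] [AddCommGroup V] [Module R V]

theorem map_pow_le_of_map_le_sub {N : Module.End R V} {M : ℤ → Submodule R V} {d : ℤ}
    (h : ∀ r, (M r).map N ≤ M (r - d)) (k : ℕ) (r : ℤ) :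
    (M r).map (N ^ k) ≤ M (r - k * d) := by
  induction k with
  | zero => simp [Module.End.one_eq_id]
  | succ k ih =>
    calc (M r).map (N ^ (k + 1)) = ((M r).map (N ^ k)).map N := by
          rw [pow_succ', Module.End.mul_eq_comp, Submodule.map_comp]
      _ ≤ (M (r - k * d)).map N := Submodule.map_mono ih
      _ ≤ M (r - k * d - d) := h _
      _ = M (r - (k + 1 : ℕ) * d) := by congr 1; push_cast; ring

/-- The property of being a monodromy filtration of `N`: an increasing, exhaustive and separated
filtration, shifted by `-2` under `N`, for which `N ^ r` induces isomorphisms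
`M r / M (r - 1) ≃ M (-r) / M (-r - 1)`. The last condition is expressed on representatives, as
injectivity and surjectivity of the induced maps, to avoid forming the quotients. -/
structure IsMonodromyFiltration (N : Module.End R V) (M : ℤ → Submodule R V) : Prop where
  monotone : Monotone M
  exhaustive : ∃ a : ℤ, ∀ r ≥ a, M r = ⊤
  separated : ∃ b : ℤ, ∀ r ≤ b, M r = ⊥
  map_le : ∀ r : ℤ, (M r).map N ≤ M (r - 2)
  graded_injective : ∀ r : ℕ, ∀ x ∈ M r, (N ^ r) x ∈ M (-r - 1) → x ∈ M (r - 1)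
  graded_surjective : ∀ r : ℕ, ∀ y ∈ M (-r), ∃ x ∈ M r, (N ^ r) x - y ∈ M (-r - 1)

theorem isMonodromyFiltration_iff {N : Module.End R V} {M : ℤ → Submodule R V} :
    IsMonodromyFiltration N M ↔
      Monotone M ∧
      (∃ a : ℤ, ∀ r ≥ a, M r = ⊤) ∧
      (∃ b : ℤ, ∀ r ≤ b, M r = ⊥) ∧
      (∀ r : ℤ, (M r).map N ≤ M (r - 2)) ∧
      (∀ r : ℕ,
        (∀ x ∈ M (r : ℤ), (N ^ r) x ∈ M (-(r : ℤ) - 1) → x ∈ M ((r : ℤ) - 1)) ∧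
        (∀ y ∈ M (-(r : ℤ)), ∃ x ∈ M (r : ℤ), (N ^ r) x - y ∈ M (-(r : ℤ) - 1))) :=
  ⟨fun ⟨mono, exh, sep, shift, inj, surj⟩ => ⟨mono, exh, sep, shift, fun r => ⟨inj r, surj r⟩⟩,
    fun ⟨mono, exh, sep, shift, iso⟩ =>
      ⟨mono, exh, sep, shift, fun r => (iso r).1, fun r => (iso r).2⟩⟩

namespace IsMonodromyFiltration

variable {N : Module.End R V} {M M' : ℤ → Submodule R V}

theorem le_map_pow (h : IsMonodromyFiltration N M) (r : ℕ) : M (-r) ≤ (M r).map (N ^ r) := by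
  obtain ⟨b, hb⟩ := h.separated
  obtain ⟨n, hrn, hbn⟩ : ∃ n : ℕ, r ≤ n ∧ -(n : ℤ) ≤ b := ⟨max r (-b).toNat, by omega, by omega⟩
  induction hrn using Nat.decreasingInduction with
  | self => exact (hb _ hbn).trans_le bot_le
  | @of_succ r _ ih =>
    intro y hy
    obtain ⟨x, hx, hxy⟩ := h.graded_surjective r y hy
    rw [show -(r : ℤ) - 1 = -(r + 1 : ℕ) by push_cast; ring] at hxy
    obtain ⟨z, hz, hzxy⟩ := ih hxy
    have hNz : N z ∈ M r :=
      h.monotone (by push_cast; omega) (h.map_le _ (Submodule.mem_map_of_mem hz))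
    refine ⟨x - N z, sub_mem hx hNz, ?_⟩
    rw [map_sub, ← Module.End.mul_apply, ← pow_succ, hzxy, sub_sub_cancel]

theorem map_pow (h : IsMonodromyFiltration N M) (r : ℕ) : (M r).map (N ^ r) = M (-r) := by
  refine le_antisymm ?_ (h.le_map_pow r)
  convert map_pow_le_of_map_le_sub h.map_le r r using 2
  ring

theorem eq_inf_comap_map (h : IsMonodromyFiltration N M) (r : ℕ) :
    M r = M (r + 1 : ℕ) ⊓ ((M (r + 2 : ℕ)).map (N ^ (r + 2))).comap (N ^ (r + 1)) := by
  rw [h.map_pow]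
  refine le_antisymm (le_inf (h.monotone (by omega)) ?_) fun x ⟨hx, hNx⟩ => ?_
  · rw [← Submodule.map_le_iff_le_comap]
    convert map_pow_le_of_map_le_sub h.map_le (r + 1) r using 2
    push_cast
    ring
  · rw [show -((r + 2 : ℕ) : ℤ) = -(r + 1 : ℕ) - 1 by push_cast; ring] at hNx
    rw [show (r : ℤ) = (r + 1 : ℕ) - 1 by push_cast; ring]
    exact h.graded_injective (r + 1) x hx hNx

theorem eq_natCast (h : IsMonodromyFiltration N M) (h' : IsMonodromyFiltration N M') (r : ℕ) :
    M r = M' r := by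
  obtain ⟨a, ha⟩ := h.exhaustive
  obtain ⟨a', ha'⟩ := h'.exhaustive
  obtain ⟨n, hrn, han, han'⟩ : ∃ n : ℕ, r ≤ n ∧ a ≤ n ∧ a' ≤ n :=
    ⟨max r (max a.toNat a'.toNat), by omega, by omega, by omega⟩
  suffices M r = M' r ∧ M (r + 1 : ℕ) = M' (r + 1 : ℕ) from this.1
  induction hrn using Nat.decreasingInduction with
  | self =>
    exact ⟨by rw [ha _ han, ha' _ han'], by rw [ha _ (by omega), ha' _ (by omega)]⟩
  | @of_succ r _ ih =>
    obtain ⟨eq_succ, eq_succ_succ⟩ := ih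
    exact ⟨by rw [h.eq_inf_comap_map, h'.eq_inf_comap_map, eq_succ, eq_succ_succ], eq_succ⟩

theorem unique (h : IsMonodromyFiltration N M) (h' : IsMonodromyFiltration N M') : M = M' := by
  funext r
  obtain ⟨n, rfl | rfl⟩ := r.eq_nat_or_neg
  · exact h.eq_natCast h' n
  · rw [← h.map_pow, ← h'.map_pow, h.eq_natCast h']

end IsMonodromyFiltration

/-- The monodromy filtration of `N` in closed form, the sum over `q` of
`N ^ q (ker N ^ (r + 2 * q + 1)) = ker N ^ (r + q + 1) ⊓ range N ^ q`. Truncating a negative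
exponent `r + 2 * q + 1` to `0` makes the corresponding term zero. -/
def monodromyFiltration (N : Module.End R V) (r : ℤ) : Submodule R V :=
  ⨆ q : ℕ, (LinearMap.ker (N ^ (r + 2 * q + 1).toNat)).map (N ^ q)

namespace monodromyFiltration

variable (N : Module.End R V)

theorem le_iff {r : ℤ} {W : Submodule R V} :
    monodromyFiltration N r ≤ W ↔
      ∀ (q : ℕ) (z : V), (N ^ (r + 2 * q + 1).toNat) z = 0 → (N ^ q) z ∈ W := by
  simp only [monodromyFiltration, iSup_le_iff, Submodule.map_le_iff_le_comap]
  rfl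

variable {N} in
theorem pow_apply_mem {r : ℤ} {k q : ℕ} {z : V} (hz : (N ^ k) z = 0)
    (hk : k ≤ (r + 2 * q + 1).toNat) :
    (N ^ q) z ∈ monodromyFiltration N r :=
  (le_iff N).1 le_rfl q z (Module.End.pow_map_zero_of_le hk hz)

theorem ker_pow_le (k : ℕ) : LinearMap.ker (N ^ k) ≤ monodromyFiltration N (k - 1) :=
  fun _ hz => pow_apply_mem (q := 0) hz (by omega)

theorem monotone : Monotone (monodromyFiltration N) := fun _ _ hrs =>
  (le_iff N).2 fun _ _ hz => pow_apply_mem hz (by omega)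

theorem map_le (r : ℤ) :
    (monodromyFiltration N r).map N ≤ monodromyFiltration N (r - 2) := by
  rw [Submodule.map_le_iff_le_comap, le_iff]
  intro q z hz
  rw [Submodule.mem_comap, ← Module.End.mul_apply, ← pow_succ']
  exact pow_apply_mem hz (by omega)

theorem le_map_pow (r : ℕ) :
    monodromyFiltration N (-r) ≤ (monodromyFiltration N r).map (N ^ r) := by
  refine (le_iff N).2 fun q z hz => ?_
  rcases lt_or_ge q r with hqr | hrq
  · rw [Module.End.pow_map_zero_of_le (by omega) hz]
    exact zero_mem _
  · refine ⟨(N ^ (q - r)) z, pow_apply_mem hz (by omega), ?_⟩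
    rw [← Module.End.mul_apply, ← pow_add, Nat.add_sub_cancel' hrq]

theorem mem_of_pow_apply_mem {r : ℕ} {x : V} (hx : (N ^ r) x ∈ monodromyFiltration N (-r - 1)) :
    x ∈ monodromyFiltration N (r - 1) := by
  rw [show -(r : ℤ) - 1 = -(r + 1 : ℕ) by push_cast; ring] at hx
  obtain ⟨w, hw, hwx⟩ := le_map_pow N (r + 1) hx
  have hNw : N w ∈ monodromyFiltration N (r - 1) :=
    monotone N (by push_cast; omega) (map_le N _ (Submodule.mem_map_of_mem hw))
  have hker : x - N w ∈ LinearMap.ker (N ^ r) := by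
    rw [LinearMap.mem_ker, map_sub, ← Module.End.mul_apply, ← pow_succ, hwx, sub_self]
  exact (Submodule.sub_mem_iff_left _ hNw).1 (ker_pow_le N r hker)

variable {N} {n : ℕ}

theorem eq_top (hn : N ^ n = 0) {r : ℤ} (hr : n - 1 ≤ r) : monodromyFiltration N r = ⊤ :=
  top_le_iff.1 <| calc
    ⊤ = LinearMap.ker (N ^ n) := by rw [hn, LinearMap.ker_zero]
    _ ≤ monodromyFiltration N (n - 1) := ker_pow_le N n
    _ ≤ monodromyFiltration N r := monotone N hr

theorem eq_bot (hn : N ^ n = 0) {r : ℤ} (hr : r ≤ -n) : monodromyFiltration N r = ⊥ := by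
  refine le_bot_iff.1 <| (le_iff N).2 fun q z hz => (Submodule.mem_bot R).2 ?_
  rcases lt_or_ge q n with hqn | hnq
  · exact Module.End.pow_map_zero_of_le (by omega) hz
  · rw [pow_eq_zero_of_le hnq hn, LinearMap.zero_apply]

theorem isMonodromyFiltration (hN : IsNilpotent N) :
    IsMonodromyFiltration N (monodromyFiltration N) where
  monotone := monotone N
  exhaustive := let ⟨n, hn⟩ := hN; ⟨n - 1, fun _ => eq_top hn⟩
  separated := let ⟨n, hn⟩ := hN; ⟨-n, fun _ => eq_bot hn⟩
  map_le := map_le N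
  graded_injective _ _ _ := mem_of_pow_apply_mem N
  graded_surjective r y hy := by
    obtain ⟨x, hx, rfl⟩ := le_map_pow N r hy
    exact ⟨x, hx, by rw [sub_self]; exact zero_mem _⟩

end monodromyFiltration

theorem stmt7_general (N : Module.End R V) (hN : IsNilpotent N) :
    ∃! M : ℤ → Submodule R V, IsMonodromyFiltration N M :=
  have isMonodromy := monodromyFiltration.isMonodromyFiltration hN
  ⟨monodromyFiltration N, isMonodromy, fun _ h => h.unique isMonodromy⟩

end MonodromyFiltration

/-- Existence and uniqueness of the monodromy filtration: for a nilpotent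
endomorphism `N` of a finite-dimensional vector space over a field of characteristic
zero, there is a unique increasing, exhaustive and separated filtration `(M_r)_{r ∈ ℤ}`
with `N(M_r) ⊆ M_{r-2}` such that for each `r ≥ 0` the map induced by `N^r` from
`M_r/M_{r-1}` to `M_{-r}/M_{-r-1}` is an isomorphism (encoded by injectivity and
surjectivity of the induced map on subquotients). -/
theorem stmt7 (K V : Type*) [Field K] [CharZero K] [AddCommGroup V] [Module K V]
    [FiniteDimensional K V] (N : Module.End K V) (hN : IsNilpotent N) :
    ∃! M : ℤ → Submodule K V,
      Monotone M ∧
      (∃ a : ℤ, ∀ r ≥ a, M r = ⊤) ∧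
      (∃ b : ℤ, ∀ r ≤ b, M r = ⊥) ∧
      (∀ r : ℤ, (M r).map N ≤ M (r - 2)) ∧
      (∀ r : ℕ,
        (∀ x ∈ M (r : ℤ), (N ^ r) x ∈ M (-(r : ℤ) - 1) → x ∈ M ((r : ℤ) - 1)) ∧
        (∀ y ∈ M (-(r : ℤ)), ∃ x ∈ M (r : ℤ), (N ^ r) x - y ∈ M (-(r : ℤ) - 1))) := by
  simpa only [isMonodromyFiltration_iff] using stmt7_general N hN
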